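/- arXiv:1101.2718 — 2 statements merged into one kernel-verified Lean document; each statement's English description precedes it below -/
import Mathlib

section
/- Let G be a finite connected simple graph with V vertices and V+1 edges in which V−1 of the vertices have degree 2 and the remaining vertex has degree 4 (i.e., G is two cycles joined at a single common vertex). Then the nim-value of graph chomp on G is 1. -/
/-!
For a bipartite graph with `n` vertices and `m` edges the nim-value is
`(n mod 2) + 2 (m mod 2)` (`grundy_bipartite`), by induction: a move never preserves both parities,
and the moves needed to reach the smaller values exist by the handshake lemma and because a
bipartite graph with an odd number of edges has a vertex of odd degree.

Let `G` be as in the theorem, with `n` vertices and `n + 1` edges. All degrees are even, so every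
edge cut is even (`even_edgeNum_cut`). Consequently `G` has no bridge, and `G` minus an edge is
connected with `n` vertices and `n` edges, hence unicyclic.

* No move reaches `1`. Every cycle passes through `A`, so `G - A` is a forest; it has `n - 1`
  vertices and `n - 3` edges, hence value `0` or `3`. Any other move leads to a graph `H` contained
  in `G` minus an edge, with equal parities of the numbers of vertices and edges. If `H` is
  bipartite its value is `0` or `3`; otherwise destroying its only cycle, by deleting an edge
  or a vertex of degree two depending on the parity, is a move from `H` to a forest of value `1`
  (`grundy_unicyclic_ne_one`).
* Some move reaches `0`. If `n` is odd, delete `A`. If `n` is even, evenness of the cut defined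
  by a 2-colouring of a spanning tree yields an edge whose deletion leaves a bipartite graph
  (`exists_deleteEdge_isBipartite`), with `n` vertices and `n` edges.
-/

attribute [local instance] Classical.propDecidable

/-- The minimal excludant of a finite set of naturals. -/
noncomputable def mex (s : Finset ℕ) : ℕ := sInf {n : ℕ | n ∉ s}

/-- The position resulting from choosing `σ` in subset take-away:
remove `σ` together with every element containing it. -/
noncomputable def takeawayMove {V : Type*} [DecidableEq V] (Δ : Finset (Finset V))
    (σ : Finset V) : Finset (Finset V) :=
  Δ.filter (fun t => ¬ σ ⊆ t)

/-- The Grundy (nim-)value of subset take-away played on `Δ`: the minimal excludant of the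
Grundy values of all positions reachable in one move. -/
noncomputable def grundy {V : Type*} [DecidableEq V] (Δ : Finset (Finset V)) : ℕ :=
  mex (Δ.attach.image (fun σ => grundy (takeawayMove Δ σ.1)))
termination_by Δ.card
decreasing_by
  simp only [takeawayMove]
  exact Finset.card_lt_card (Finset.filter_ssubset.mpr ⟨σ.1, σ.2, by simp⟩)

/-- The simplicial complex of vertices and edges of a finite simple graph `G`.
Graph chomp on `G` is subset take-away on this complex, so the nim-value of graph chomp
on `G` is `grundy (graphComplex G)`. -/
noncomputable def graphComplex {V : Type*} [Fintype V] [DecidableEq V] (G : SimpleGraph V) :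
    Finset (Finset V) :=
  (Finset.univ : Finset V).image (fun v => ({v} : Finset V)) ∪
    Finset.univ.filter (fun s : Finset V => ∃ u v, G.Adj u v ∧ s = {u, v})

/-- The number of edges of `H`, as a `Set.ncard` so that it carries no decidability instance. -/
noncomputable def edgeNum {V : Type*} (H : SimpleGraph V) : ℕ := H.edgeSet.ncard

/-- The degree of `v` in `H`, as a `Set.ncard` so that it carries no decidability instance. -/
noncomputable def degNum {V : Type*} (H : SimpleGraph V) (v : V) : ℕ := (H.neighborSet v).ncard

/-- The position of graph chomp whose remaining vertices are `S` and whose remaining edges are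
those of `H`. The edges of `H` are meant to have both ends in `S`; this is assumed separately
where it matters. -/
noncomputable def position {V : Type*} [Fintype V] [DecidableEq V] (S : Finset V)
    (H : SimpleGraph V) : Finset (Finset V) :=
  S.image (fun v => ({v} : Finset V)) ∪
    Finset.univ.filter (fun s : Finset V => ∃ u v, H.Adj u v ∧ s = {u, v})

/-! ### Degrees, cuts and parities -/

section Counting

variable {V : Type*} [Fintype V] [DecidableEq V]

lemma edgeNum_eq {V : Type*} (H : SimpleGraph V) [Fintype H.edgeSet] : edgeNum H = H.edgeFinset.card := by
  rw [edgeNum, ← SimpleGraph.coe_edgeFinset, Set.ncard_coe_finset]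

lemma degNum_eq {V : Type*} (H : SimpleGraph V) (v : V) [Fintype (H.neighborSet v)] :
    degNum H v = H.degree v := by
  rw [degNum, ← SimpleGraph.coe_neighborFinset, Set.ncard_coe_finset,
    SimpleGraph.card_neighborFinset_eq_degree]

lemma sum_degNum {V : Type*} [Fintype V] (H : SimpleGraph V) :
    ∑ v, degNum H v = 2 * edgeNum H := by
  simp only [degNum_eq, edgeNum_eq]
  exact H.sum_degrees_eq_twice_card_edges

lemma edgeNum_deleteEdge {V : Type*} [Finite V] {H : SimpleGraph V} {e : Sym2 V} (he : e ∈ H.edgeSet) :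
    edgeNum (H.deleteEdges {e}) + 1 = edgeNum H := by
  rw [edgeNum, SimpleGraph.edgeSet_deleteEdges]
  exact Set.ncard_sdiff_singleton_add_one he (Set.toFinite _)

lemma edgeNum_deleteVertex (H : SimpleGraph V) (v : V) :
    edgeNum (H.deleteIncidenceSet v) + degNum H v = edgeNum H := by
  rw [edgeNum_eq, edgeNum_eq, degNum_eq, SimpleGraph.card_edgeFinset_deleteIncidenceSet]
  have := H.card_incidenceFinset_eq_degree v
  have h2 := Finset.card_le_card (H.incidenceFinset_subset v)
  omega

/-- In a graph with all degrees even, every edge cut has even size. -/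
lemma even_edgeNum_cut {H : SimpleGraph V} (hH : ∀ v, Even (degNum H v)) (X : Finset V) :
    Even (edgeNum (H.between (X : Set V) ((X : Set V)ᶜ))) := by
  set B := H.between (X : Set V) ((X : Set V)ᶜ) with hB
  set M := H.between (X : Set V) (X : Set V) with hM
  -- The edges of `B` are counted by their ends in `X`.
  have h1 : ∑ v ∈ X, degNum B v = edgeNum B := by
    have hb : B.IsBipartiteWith (X : Set V) ((Xᶜ : Finset V) : Set V) := by
      rw [Finset.coe_compl]
      exact SimpleGraph.between_isBipartiteWith disjoint_compl_right
    simp only [degNum_eq, edgeNum_eq]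
    exact SimpleGraph.isBipartiteWith_sum_degrees_eq_card_edges hb
  have h2 : ∑ v ∈ X, degNum M v = 2 * edgeNum M := by
    rw [← sum_degNum]
    refine Finset.sum_subset (Finset.subset_univ _) fun v _ hv => ?_
    rw [degNum, Set.ncard_eq_zero]
    ext w
    simp [hM, SimpleGraph.between_adj, hv]
  have h3 : ∀ v ∈ X, degNum H v = degNum B v + degNum M v := by
    intro v hv
    rw [degNum, degNum, degNum, ← Set.ncard_union_eq]
    · congr 1
      ext w
      by_cases hw : w ∈ X <;> simp [hB, hM, SimpleGraph.between_adj, hv, hw]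
    · rw [Set.disjoint_left]
      intro w
      by_cases hw : w ∈ X <;> simp [hB, hM, SimpleGraph.between_adj, hv, hw]
  have h4 : Even (∑ v ∈ X, degNum H v) := Finset.even_sum _ fun v _ => hH v
  rw [Finset.sum_congr rfl h3, Finset.sum_add_distrib, h1, h2] at h4
  grind

lemma exists_even_degNum {V : Type*} [Fintype V] {S : Finset V} {H : SimpleGraph V}
    (hS : ∀ u v, H.Adj u v → u ∈ S) (hodd : Odd S.card) : ∃ v ∈ S, Even (degNum H v) := by
  by_contra! h
  have h0 : ∑ v ∈ S, degNum H v = 2 * edgeNum H := by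
    rw [← sum_degNum]
    refine Finset.sum_subset (Finset.subset_univ _) fun v _ hv => ?_
    rw [degNum, Set.ncard_eq_zero]
    ext w
    simpa using fun hw => hv (hS v w hw)
  have h1 := Finset.odd_sum_iff_odd_card_odd (s := S) (degNum H)
  rw [h0, Finset.filter_true_of_mem (fun v hv => by simpa using h v hv)] at h1
  have := h1.2 hodd
  grind

/-- A bipartite graph with an odd number of edges has a vertex of odd degree. -/
lemma exists_odd_degNum {S : Finset V} {H : SimpleGraph V} (hS : ∀ u v, H.Adj u v → u ∈ S)
    (hbip : H.IsBipartite) (hodd : Odd (edgeNum H)) : ∃ v ∈ S, Odd (degNum H v) := by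
  by_contra! h
  obtain ⟨c⟩ := hbip
  have hev : ∀ v, Even (degNum H v) := by
    intro v
    by_cases hv : v ∈ S
    · simpa using h v hv
    · have : degNum H v = 0 := by
        rw [degNum, Set.ncard_eq_zero]
        ext w
        simpa using fun hw => hv (hS v w hw)
      simp [this]
  have h1 := even_edgeNum_cut hev (Finset.univ.filter fun v => c v = 0)
  have h2 : H.between ((Finset.univ.filter fun v => c v = 0 : Finset V) : Set V)
      (((Finset.univ.filter fun v => c v = 0 : Finset V) : Set V)ᶜ) = H := by
    ext u v
    simp only [SimpleGraph.between_adj]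
    refine ⟨fun h => h.1, fun h => ⟨h, ?_⟩⟩
    have := c.valid h
    simp only [Finset.coe_filter, Finset.mem_univ, true_and, Set.mem_ofPred_eq, Set.mem_compl_iff]
    generalize c u = a at *
    generalize c v = b at *
    fin_cases a <;> fin_cases b <;> simp_all
  rw [h2] at h1
  exact Nat.not_even_iff_odd.2 hodd h1

end Counting

/-! ### Nim-values of bipartite graphs -/

section Game

variable {V : Type*} [Fintype V] [DecidableEq V]

lemma mex_notMem (s : Finset ℕ) : mex s ∉ s :=
  Nat.sInf_mem (s := {n : ℕ | n ∉ s}) s.exists_notMem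

lemma grundy_move_ne {V : Type*} [DecidableEq V] {Δ : Finset (Finset V)} {σ : Finset V}
    (h : σ ∈ Δ) : grundy (takeawayMove Δ σ) ≠ grundy Δ := by
  intro heq
  apply mex_notMem (Δ.attach.image (fun σ => grundy (takeawayMove Δ σ.1)))
  rw [← grundy.eq_1 Δ, ← heq]
  exact Finset.mem_image.2 ⟨⟨σ, h⟩, Finset.mem_attach _ _, rfl⟩

lemma grundy_eq_of {V : Type*} [DecidableEq V] {Δ : Finset (Finset V)} {k : ℕ}
    (h1 : ∀ σ ∈ Δ, grundy (takeawayMove Δ σ) ≠ k)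
    (h2 : ∀ j < k, ∃ σ ∈ Δ, grundy (takeawayMove Δ σ) = j) : grundy Δ = k := by
  rw [grundy.eq_1, mex]
  apply le_antisymm
  · apply Nat.sInf_le
    simpa using h1
  · apply le_csInf (Finset.exists_notMem _)
    intro n hn
    by_contra! hlt
    obtain ⟨σ, hσ, h⟩ := h2 n hlt
    exact hn (Finset.mem_image.2 ⟨⟨σ, hσ⟩, Finset.mem_attach _ _, h⟩)

lemma mem_position {S : Finset V} {H : SimpleGraph V} {σ : Finset V} :
    σ ∈ position S H ↔ (∃ v ∈ S, σ = {v}) ∨ ∃ u v, H.Adj u v ∧ σ = {u, v} := by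
  simp [position, eq_comm]

lemma move_vertex (S : Finset V) (H : SimpleGraph V) (v : V) :
    takeawayMove (position S H) {v} = position (S.erase v) (H.deleteIncidenceSet v) := by
  ext σ
  simp only [takeawayMove, Finset.mem_filter, mem_position, SimpleGraph.deleteIncidenceSet_adj,
    Finset.singleton_subset_iff, Finset.mem_erase]
  constructor
  · rintro ⟨⟨w, hw, rfl⟩ | ⟨a, b, hab, rfl⟩, hv⟩
    · exact Or.inl ⟨w, ⟨by rintro rfl; simp at hv, hw⟩, rfl⟩
    · exact Or.inr ⟨a, b, ⟨hab, by rintro rfl; simp at hv, by rintro rfl; simp at hv⟩, rfl⟩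
  · rintro (⟨w, ⟨hwv, hw⟩, rfl⟩ | ⟨a, b, ⟨hab, ha, hb⟩, rfl⟩)
    · exact ⟨Or.inl ⟨w, hw, rfl⟩, by simpa using hwv.symm⟩
    · exact ⟨Or.inr ⟨a, b, hab, rfl⟩, by simp [ha.symm, hb.symm]⟩

lemma move_edge (S : Finset V) {H : SimpleGraph V} {x y : V} (hxy : H.Adj x y) :
    takeawayMove (position S H) {x, y} = position S (H.deleteEdges {s(x, y)}) := by
  have hne := hxy.ne
  ext σ
  simp only [takeawayMove, Finset.mem_filter, mem_position, SimpleGraph.deleteEdges_adj,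
    Set.mem_singleton_iff]
  constructor
  · rintro ⟨⟨w, hw, rfl⟩ | ⟨a, b, hab, rfl⟩, hv⟩
    · exact Or.inl ⟨w, hw, rfl⟩
    · refine Or.inr ⟨a, b, ⟨hab, fun h => hv ?_⟩, rfl⟩
      rcases Sym2.eq_iff.1 h with ⟨rfl, rfl⟩ | ⟨rfl, rfl⟩
      · exact subset_rfl
      · rw [Finset.pair_comm]
  · rintro (⟨w, hw, rfl⟩ | ⟨a, b, ⟨hab, h⟩, rfl⟩)
    · refine ⟨Or.inl ⟨w, hw, rfl⟩, fun h => hne ?_⟩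
      simp only [Finset.insert_subset_iff, Finset.mem_singleton, Finset.singleton_subset_iff] at h
      rw [h.1, h.2]
    · refine ⟨Or.inr ⟨a, b, hab, rfl⟩, fun hs => h ?_⟩
      simp only [Finset.insert_subset_iff, Finset.mem_insert, Finset.mem_singleton,
        Finset.singleton_subset_iff] at hs
      rw [Sym2.eq_iff]
      grind

/-- On a bipartite graph the nim-value is determined by the parities of the numbers of vertices
and edges. Deleting an edge flips the edge bit; deleting a vertex flips the vertex bit, and also
the edge bit exactly when its degree is odd. Thus no move keeps the value, and the moves needed
to reach every smaller value exist by `exists_even_degNum` and `exists_odd_degNum`. -/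
lemma grundy_bipartite (n : ℕ) : ∀ (S : Finset V) (H : SimpleGraph V),
    S.card + edgeNum H = n → (∀ u v, H.Adj u v → u ∈ S) → H.IsBipartite →
    grundy (position S H) = S.card % 2 + 2 * (edgeNum H % 2) := by
  induction n using Nat.strong_induction_on with
  | _ n ih =>
  intro S H hn hS hbip
  have hvert : ∀ v ∈ S, grundy (takeawayMove (position S H) {v}) =
      (S.card + 1) % 2 + 2 * ((edgeNum H + degNum H v) % 2) := by
    intro v hv
    have hc := Finset.card_erase_add_one hv
    have he := edgeNum_deleteVertex H v
    rw [move_vertex, ih ((S.erase v).card + edgeNum (H.deleteIncidenceSet v)) (by omega) _ _ rfl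
      ?_ (hbip.mono_left (H.deleteIncidenceSet_le v))]
    · omega
    · intro a b hab
      rw [SimpleGraph.deleteIncidenceSet_adj] at hab
      exact Finset.mem_erase.2 ⟨hab.2.1, hS a b hab.1⟩
  have hedge : ∀ x y, H.Adj x y → grundy (takeawayMove (position S H) {x, y}) =
      S.card % 2 + 2 * ((edgeNum H + 1) % 2) := by
    intro x y hxy
    have he := edgeNum_deleteEdge (H := H) (e := s(x, y)) hxy
    rw [move_edge S hxy, ih (S.card + edgeNum (H.deleteEdges {s(x, y)})) (by omega) _ _ rfl
      ?_ (hbip.mono_left (H.deleteEdges_le _))]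
    · omega
    · intro a b hab
      exact hS a b (H.deleteEdges_le _ hab)
  have hvm : ∀ v ∈ S, {v} ∈ position S H := fun v hv => mem_position.2 (Or.inl ⟨v, hv, rfl⟩)
  have hem : ∀ x y, H.Adj x y → {x, y} ∈ position S H :=
    fun x y h => mem_position.2 (Or.inr ⟨x, y, h, rfl⟩)
  apply grundy_eq_of
  · intro σ hσ
    rcases mem_position.1 hσ with ⟨v, hv, rfl⟩ | ⟨x, y, hxy, rfl⟩
    · rw [hvert v hv]; omega
    · rw [hedge x y hxy]; omega
  · intro j hj
    -- The bits of `j` tell which kind of move is needed.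
    by_cases hb : j % 2 = S.card % 2
    · have hodd : Odd (edgeNum H) := by rw [Nat.odd_iff]; omega
      have hpos : H.edgeSet.Nonempty := by
        apply Set.nonempty_of_ncard_ne_zero
        change edgeNum H ≠ 0
        rintro h; simp [h] at hodd
      obtain ⟨e, he⟩ := hpos
      induction e with | _ x y
      refine ⟨_, hem x y he, ?_⟩
      rw [hedge x y he]
      grind
    · by_cases hc : j / 2 = edgeNum H % 2
      · obtain ⟨v, hv, hd⟩ := exists_even_degNum hS (by rw [Nat.odd_iff]; omega)
        refine ⟨_, hvm v hv, ?_⟩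
        rw [hvert v hv]
        rw [Nat.even_iff] at hd
        omega
      · obtain ⟨v, hv, hd⟩ := exists_odd_degNum hS hbip (by rw [Nat.odd_iff]; omega)
        refine ⟨_, hvm v hv, ?_⟩
        rw [hvert v hv]
        rw [Nat.odd_iff] at hd
        omega

end Game

/-! ### Two cycles joined at a vertex -/

section EvenDegrees

variable {V : Type*} [Fintype V] [DecidableEq V]

/-- A connected graph with all degrees even has no bridge: the deletion of a bridge would exhibit
it as the only edge of a cut. -/
lemma connected_deleteEdge {G : SimpleGraph V} (hconn : G.Connected)
    (hev : ∀ v, Even (degNum G v)) {x y : V} (hxy : G.Adj x y) :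
    (G.deleteEdges {s(x, y)}).Connected := by
  apply hconn.connected_delete_edge_of_not_isBridge
  intro hbr
  rw [SimpleGraph.isBridge_iff] at hbr
  set K := G.deleteEdges {s(x, y)} with hK
  set X : Finset V := Finset.univ.filter fun v => K.Reachable x v with hX
  have h1 := even_edgeNum_cut hev X
  have h2 : (G.between (X : Set V) ((X : Set V)ᶜ)).edgeSet = {s(x, y)} := by
    ext e
    induction e with | _ a b
    simp only [SimpleGraph.mem_edgeSet, SimpleGraph.between_adj, Set.mem_singleton_iff, hX,
      Finset.coe_filter, Finset.mem_univ, true_and, Set.mem_ofPred_eq, Set.mem_compl_iff]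
    constructor
    · rintro ⟨hab, h⟩
      by_contra hne
      have hKab : K.Adj a b := by
        rw [hK, SimpleGraph.deleteEdges_adj]
        exact ⟨hab, hne⟩
      rcases h with ⟨ha, hb⟩ | ⟨ha, hb⟩
      · exact hb (ha.trans hKab.reachable)
      · exact ha (hb.trans hKab.symm.reachable)
    · intro h
      rcases Sym2.eq_iff.1 h with ⟨rfl, rfl⟩ | ⟨rfl, rfl⟩
      · exact ⟨hxy, Or.inl ⟨.refl _, hbr⟩⟩
      · exact ⟨hxy.symm, Or.inr ⟨hbr, .refl _⟩⟩
  rw [edgeNum, h2] at h1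
  simp at h1

/-- If `G` has one edge more than it has vertices, then `G` minus an edge is unicyclic, so it
becomes a tree when an edge of a cycle is deleted as well. -/
lemma isAcyclic_deleteEdge {G : SimpleGraph V} (hconn : G.Connected)
    (hev : ∀ v, Even (degNum G v)) (hE : edgeNum G = Fintype.card V + 1) {x y : V}
    (hxy : G.Adj x y) {H : SimpleGraph V} (hH : H ≤ G.deleteEdges {s(x, y)}) {u : V}
    {p : H.Walk u u} (hp : p.IsCycle) {a b : V} (hab : s(a, b) ∈ p.edges) :
    (H.deleteEdges {s(a, b)}).IsAcyclic := by
  set K := G.deleteEdges {s(x, y)} with hK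
  have hKc : K.Connected := connected_deleteEdge hconn hev hxy
  have hKE := edgeNum_deleteEdge (H := G) (e := s(x, y)) hxy
  rw [← hK] at hKE
  have hpK : (p.mapLe hH).IsCycle := (SimpleGraph.Walk.isCycle_mapLe hH).2 hp
  have habK : s(a, b) ∈ (p.mapLe hH).edges := by simpa using hab
  have hnb : ¬ K.IsBridge s(a, b) := fun h => h.notMem_edges_of_isCycle hpK habK
  have hT := hKc.connected_delete_edge_of_not_isBridge hnb
  have hTE := edgeNum_deleteEdge (SimpleGraph.Walk.edges_subset_edgeSet _ habK)
  have htree : (K.deleteEdges {s(a, b)}).IsTree := by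
    rw [SimpleGraph.isTree_iff_connected_and_card]
    refine ⟨hT, ?_⟩
    rw [Nat.card_eq_fintype_card (α := V)]
    change edgeNum _ + 1 = _
    omega
  exact htree.isAcyclic.anti (SimpleGraph.deleteEdges_mono hH)

/-- Along a cycle, a vertex of degree two has no neighbours other than its two neighbours on the
cycle. -/
lemma cycle_neighborSet_eq {V : Type*} [Finite V] {G : SimpleGraph V} {u w : V}
    {p : G.Walk u u} (hp : p.IsCycle) (hw : w ∈ p.support) (hd : degNum G w = 2) :
    p.toSubgraph.neighborSet w = G.neighborSet w := by
  apply Set.eq_of_subset_of_ncard_le (p.toSubgraph.neighborSet_subset w) _ (Set.toFinite _)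
  rw [hp.ncard_neighborSet_toSubgraph_eq_two hw]
  exact hd.le

/-- If all vertices except `A` have degree two in the connected graph `G`, every cycle passes
through `A`, since a cycle avoiding `A` would be a whole component. -/
lemma mem_cycle_support {G : SimpleGraph V} (hconn : G.Connected) {A : V}
    (hdeg : ∀ v, v ≠ A → degNum G v = 2) {u : V} {p : G.Walk u u} (hp : p.IsCycle) :
    A ∈ p.support := by
  by_contra hA
  have hclosed : ∀ a b, G.Walk a b → a ∈ p.support → b ∈ p.support := by
    intro a b q
    induction q with
    | nil => exact id
    | cons hadj q ih =>
      intro ha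
      apply ih
      rename_i a c _
      have : c ∈ p.toSubgraph.neighborSet a := by
        rw [cycle_neighborSet_eq hp ha (hdeg a (by rintro rfl; exact hA ha))]
        exact hadj
      exact p.mem_verts_toSubgraph.1 (SimpleGraph.Subgraph.Adj.snd_mem this)
  obtain ⟨q⟩ := hconn.preconnected u A
  exact hA (hclosed u A q p.start_mem_support)

lemma isAcyclic_deleteVertex {G : SimpleGraph V} (hconn : G.Connected) {A : V}
    (hdeg : ∀ v, v ≠ A → degNum G v = 2) : (G.deleteIncidenceSet A).IsAcyclic := by
  intro u p hp
  have hle := G.deleteIncidenceSet_le A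
  have hA := mem_cycle_support hconn hdeg ((SimpleGraph.Walk.isCycle_mapLe hle).2 hp)
  have hA' : A ∈ p.support := by simpa using hA
  have h2 := hp.ncard_neighborSet_toSubgraph_eq_two hA'
  obtain ⟨w, hw⟩ := Set.nonempty_of_ncard_ne_zero (h2.trans_ne two_ne_zero)
  have := p.toSubgraph.adj_sub hw
  rw [SimpleGraph.deleteIncidenceSet_adj] at this
  exact this.2.1 rfl

/-- The positions reached from two cycles joined at `A` by a move other than deleting `A` lie in
`G` minus an edge and have as many vertices as edges modulo two. If such a position is bipartite,
its value is `0` or `3`. Otherwise it has a cycle, and the deletion of an edge of this cycle, or of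
a vertex of degree two on it, is a move to a bipartite position of value `1`. -/
lemma grundy_unicyclic_ne_one {G : SimpleGraph V} (hconn : G.Connected)
    (hev : ∀ v, Even (degNum G v)) (hE : edgeNum G = Fintype.card V + 1) {A : V}
    (hdeg : ∀ v, v ≠ A → degNum G v = 2) {x y : V} (hxy : G.Adj x y)
    {H : SimpleGraph V} (hH : H ≤ G.deleteEdges {s(x, y)}) {S : Finset V}
    (hS : ∀ u v, H.Adj u v → u ∈ S) (hpar : S.card % 2 = edgeNum H % 2) :
    grundy (position S H) ≠ 1 := by
  by_cases hbip : H.IsBipartite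
  · rw [grundy_bipartite _ S H rfl hS hbip]
    omega
  have hcyc : ¬ H.IsAcyclic := fun h => hbip h.isBipartite
  simp only [SimpleGraph.IsAcyclic, not_forall, not_not] at hcyc
  obtain ⟨u, p, hp⟩ := hcyc
  -- An edge `s(w, z)` of the cycle with `w ≠ A`.
  obtain ⟨w, z, hwA, hwz⟩ : ∃ w z, w ≠ A ∧ s(w, z) ∈ p.edges := by
    have h2 := hp.ncard_neighborSet_toSubgraph_eq_two p.start_mem_support
    obtain ⟨z, hz⟩ := Set.nonempty_of_ncard_ne_zero (h2.trans_ne two_ne_zero)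
    have hz' : s(u, z) ∈ p.edges := SimpleGraph.Walk.adj_toSubgraph_iff_mem_edges.1 hz
    by_cases hu : u = A
    · refine ⟨z, u, fun h => ?_, by rwa [Sym2.eq_swap]⟩
      exact (p.adj_of_mem_edges hz').ne (hu.trans h.symm)
    · exact ⟨u, z, hu, hz'⟩
  have hadj : H.Adj w z := p.adj_of_mem_edges hwz
  have hacyc := isAcyclic_deleteEdge hconn hev hE hxy hH hp hwz
  have hHG : H ≤ G := hH.trans (G.deleteEdges_le _)
  rcases Nat.mod_two_eq_zero_or_one S.card with h0 | h1
  · have hwS : w ∈ S := hS w z hadj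
    have hdw : degNum H w = 2 := by
      apply le_antisymm
      · rw [← hdeg w hwA]
        exact Set.ncard_le_ncard (fun v hv => hHG hv) (Set.toFinite _)
      · rw [← hp.ncard_neighborSet_toSubgraph_eq_two (p.fst_mem_support_of_mem_edges hwz)]
        exact Set.ncard_le_ncard (p.toSubgraph.neighborSet_subset w) (Set.toFinite _)
    have hle : H.deleteIncidenceSet w ≤ H.deleteEdges {s(w, z)} := by
      intro a b hab
      rw [SimpleGraph.deleteIncidenceSet_adj] at hab
      rw [SimpleGraph.deleteEdges_adj]
      refine ⟨hab.1, fun h => ?_⟩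
      rcases Sym2.eq_iff.1 h with ⟨rfl, -⟩ | ⟨-, rfl⟩
      · exact hab.2.1 rfl
      · exact hab.2.2 rfl
    have hmem : {w} ∈ position S H := mem_position.2 (Or.inl ⟨w, hwS, rfl⟩)
    have hc := Finset.card_erase_add_one hwS
    have he := edgeNum_deleteVertex H w
    have hg : grundy (takeawayMove (position S H) {w}) = 1 := by
      rw [move_vertex, grundy_bipartite _ _ _ rfl ?_ (hacyc.anti hle).isBipartite]
      · omega
      · intro a b hab
        rw [SimpleGraph.deleteIncidenceSet_adj] at hab
        exact Finset.mem_erase.2 ⟨hab.2.1, hS a b hab.1⟩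
    exact hg ▸ (grundy_move_ne hmem).symm
  · have hmem : {w, z} ∈ position S H := mem_position.2 (Or.inr ⟨w, z, hadj, rfl⟩)
    have he := edgeNum_deleteEdge (H := H) (e := s(w, z)) hadj
    have hg : grundy (takeawayMove (position S H) {w, z}) = 1 := by
      rw [move_edge S hadj, grundy_bipartite _ _ _ rfl ?_ hacyc.isBipartite]
      · omega
      · exact fun a b hab => hS a b (H.deleteEdges_le _ hab)
    exact hg ▸ (grundy_move_ne hmem).symm

/-- With an even number of vertices, deleting one suitable edge makes the graph bipartite: the cut
given by a 2-colouring of a spanning tree has at least `|V| - 1` edges, hence, being even, at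
least `|V|` of the `|V| + 1` edges of `G`; and it misses some edge as `|V| + 1` is odd. -/
lemma exists_deleteEdge_isBipartite {G : SimpleGraph V} (hconn : G.Connected)
    (hev : ∀ v, Even (degNum G v)) (hE : edgeNum G = Fintype.card V + 1)
    (hV : Even (Fintype.card V)) :
    ∃ x y, G.Adj x y ∧ (G.deleteEdges {s(x, y)}).IsBipartite := by
  obtain ⟨T, hTG, hT⟩ := hconn.exists_isTree_le
  obtain ⟨c⟩ := hT.isBipartite
  set X : Finset V := Finset.univ.filter fun v => c v = 0 with hX
  set B := G.between (X : Set V) ((X : Set V)ᶜ) with hB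
  have hBev : Even (edgeNum B) := even_edgeNum_cut hev X
  have hBG : B ≤ G := SimpleGraph.between_le
  have hTB : T ≤ B := by
    intro u v h
    rw [hB, SimpleGraph.between_adj]
    refine ⟨hTG h, ?_⟩
    have := c.valid h
    simp only [hX, Finset.coe_filter, Finset.mem_univ, true_and, Set.mem_ofPred_eq,
      Set.mem_compl_iff]
    generalize c u = a at *
    generalize c v = b at *
    fin_cases a <;> fin_cases b <;> simp_all
  have hTE : edgeNum T + 1 = Fintype.card V := by
    rw [edgeNum_eq]
    exact hT.card_edgeFinset
  have hTBE : edgeNum T ≤ edgeNum B :=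
    Set.ncard_le_ncard (SimpleGraph.edgeSet_mono hTB) (Set.toFinite _)
  have hBGE : edgeNum B ≤ edgeNum G :=
    Set.ncard_le_ncard (SimpleGraph.edgeSet_mono hBG) (Set.toFinite _)
  have hdiff : (G.edgeSet \ B.edgeSet).ncard + edgeNum B = edgeNum G :=
    Set.ncard_sdiff_add_ncard_of_subset (SimpleGraph.edgeSet_mono hBG) (Set.toFinite _)
  have hone : (G.edgeSet \ B.edgeSet).ncard = 1 := by
    rw [Nat.even_iff] at hBev hV
    omega
  obtain ⟨e, he⟩ := Set.ncard_eq_one.1 hone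
  induction e with | _ x y
  have hmem : s(x, y) ∈ G.edgeSet \ B.edgeSet := by rw [he]; rfl
  refine ⟨x, y, hmem.1, ?_⟩
  have hle : G.deleteEdges {s(x, y)} ≤ B := by
    intro a b hab
    rw [SimpleGraph.deleteEdges_adj] at hab
    by_contra hnB
    have : s(a, b) ∈ G.edgeSet \ B.edgeSet := ⟨hab.1, hnB⟩
    rw [he] at this
    exact hab.2 this
  exact (SimpleGraph.between_isBipartite disjoint_compl_right).mono_left hle

end EvenDegrees

/-- Let `G` be a finite connected simple graph with `V` vertices and
`V + 1` edges in which one vertex has degree `4` and all remaining vertices have degree `2`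
(i.e. `G` is two cycles joined at a single common vertex).  Then the nim-value of graph
chomp on `G` is `1`. -/
theorem grundy_two_cycles_joined_at_vertex {V : Type*} [Fintype V] [DecidableEq V]
    (G : SimpleGraph V) [DecidableRel G.Adj]
    (hconn : G.Connected) (hedges : G.edgeFinset.card = Fintype.card V + 1)
    (A : V) (hA : G.degree A = 4) (hdeg : ∀ v : V, v ≠ A → G.degree v = 2) :
    grundy (graphComplex G) = 1 := by
  have hev : ∀ v, Even (degNum G v) := by
    intro v
    rw [degNum_eq]
    by_cases hv : v = A
    · rw [hv, hA]; decide
    · rw [hdeg v hv]; decide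
  have hE : edgeNum G = Fintype.card V + 1 := by rw [edgeNum_eq, hedges]
  have hdA : degNum G A = 4 := by rw [degNum_eq, hA]
  have hd : ∀ v, v ≠ A → degNum G v = 2 := fun v hv => by rw [degNum_eq, hdeg v hv]
  change grundy (position Finset.univ G) = 1
  have hcard : ∀ v : V, (Finset.univ.erase v).card + 1 = Fintype.card V := fun v =>
    Finset.card_erase_add_one (Finset.mem_univ v)
  have hsupp : ∀ v a b : V, (G.deleteIncidenceSet v).Adj a b → a ∈ Finset.univ.erase v := by
    intro v a b hab
    rw [SimpleGraph.deleteIncidenceSet_adj] at hab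
    simpa using hab.2.1
  -- Without `A` there are as many vertices as edges modulo two, and no cycle.
  have hgA : grundy (takeawayMove (position Finset.univ G) {A}) =
      3 * ((Fintype.card V + 1) % 2) := by
    have h1 := hcard A
    have h2 := edgeNum_deleteVertex G A
    rw [move_vertex, grundy_bipartite _ _ _ rfl (hsupp A)
      (isAcyclic_deleteVertex hconn hd).isBipartite]
    omega
  have hge : ∀ x y, G.Adj x y →
      edgeNum (G.deleteEdges {s(x, y)}) = Fintype.card V := by
    intro x y hxy
    have := edgeNum_deleteEdge (H := G) (e := s(x, y)) hxy
    omega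
  apply grundy_eq_of
  · intro σ hσ
    rcases mem_position.1 hσ with ⟨v, -, rfl⟩ | ⟨x, y, hxy, rfl⟩
    · by_cases hv : v = A
      · rw [hv, hgA]; omega
      · obtain ⟨w, hw⟩ : (G.neighborSet v).Nonempty :=
          Set.nonempty_of_ncard_ne_zero ((hd v hv).trans_ne two_ne_zero)
        have h1 := hcard v
        have h2 := edgeNum_deleteVertex G v
        have h3 := hd v hv
        rw [move_vertex]
        refine grundy_unicyclic_ne_one hconn hev hE hd (x := v) (y := w) hw ?_ (hsupp v) (by omega)
        intro a b hab
        rw [SimpleGraph.deleteIncidenceSet_adj] at hab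
        rw [SimpleGraph.deleteEdges_adj]
        refine ⟨hab.1, fun h => ?_⟩
        rcases Sym2.eq_iff.1 h with ⟨h, -⟩ | ⟨-, h⟩
        · exact hab.2.1 h
        · exact hab.2.2 h
    · rw [move_edge _ hxy]
      exact grundy_unicyclic_ne_one hconn hev hE hd hxy le_rfl (by simp)
        (by rw [hge x y hxy, Finset.card_univ])
  · intro j hj
    obtain rfl : j = 0 := by omega
    rcases Nat.even_or_odd (Fintype.card V) with hV | hV
    · obtain ⟨x, y, hxy, hbip⟩ := exists_deleteEdge_isBipartite hconn hev hE hV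
      refine ⟨_, mem_position.2 (Or.inr ⟨x, y, hxy, rfl⟩), ?_⟩
      rw [move_edge _ hxy, grundy_bipartite _ _ _ rfl (by simp) hbip, hge x y hxy,
        Finset.card_univ]
      rw [Nat.even_iff] at hV
      omega
    · refine ⟨_, mem_position.2 (Or.inl ⟨A, Finset.mem_univ A, rfl⟩), ?_⟩
      rw [hgA]
      rw [Nat.odd_iff] at hV
      omega
end

section
/- Let G be the graph obtained from a cycle C by joining two nonadjacent vertices A and B of C by a new path that is internally disjoint from C (so G is a theta graph: A and B have degree 3 and every other vertex has degree 2). Then the nim-value of graph chomp on G is 1 if v(G) is odd and 2 if v(G) is even. -/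
/-!
For a bipartite graph with `v` vertices and `e` edges the nim-value is `v % 2 + 2 * (e % 2)`
(`grundy_bip`): each move changes the parity of `v` or `e`, and the vertices of even and odd degree
needed to reach every smaller value are supplied by the handshake lemma and its bipartite version.

A theta graph has `e = v + 1`, so the claimed value is the one given by this formula, but the graph
may contain odd cycles. It becomes bipartite when two of its three paths are broken, or an end
`A`, `B` is deleted, or a single path is broken such that the other two have lengths of equal
parity (all in `IsTheta.bip`). A path of this last kind always exists, and breaking it, at an edge
or at an inner vertex according to the parity of `v`, gives an option of value `0`. Deleting `A` or
`B` gives an option of value `1` if `v` is even and `2` if `v` is odd. Any other option `H` breaks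
one path and has `v` and `e` of equal parity; from `H` one can reach bipartite graphs of value `1`
and of value `2` by breaking a second path at an edge or at an inner vertex, so the value of `H`
is neither `1` nor `2` (`IsTheta.grundy_remove_local`). The mex is therefore `1` for odd `v` and
`2` for even `v`.
-/

attribute [local instance] Classical.propDecidable

/-! ### Grundy values and moves -/

section GraphChomp

set_option linter.unusedSectionVars false

variable {V : Type*} [DecidableEq V]

lemma mex_eq_iff (s : Finset ℕ) (n : ℕ) : mex s = n ↔ n ∉ s ∧ ∀ m < n, m ∈ s := by
  have hne : {n : ℕ | n ∉ s}.Nonempty := Infinite.exists_notMem_finset s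
  constructor
  · rintro rfl
    refine ⟨Nat.sInf_mem hne, fun m hm => ?_⟩
    by_contra h
    exact Nat.notMem_of_lt_sInf hm h
  · rintro ⟨h1, h2⟩
    refine le_antisymm (Nat.sInf_le h1) ?_
    by_contra h
    exact Nat.sInf_mem hne (h2 _ (not_le.mp h))

lemma grundy_eq_iff (Δ : Finset (Finset V)) (n : ℕ) :
    grundy Δ = n ↔ (∀ σ ∈ Δ, grundy (takeawayMove Δ σ) ≠ n) ∧
      ∀ m < n, ∃ σ ∈ Δ, grundy (takeawayMove Δ σ) = m := by
  rw [grundy, mex_eq_iff]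
  simp

lemma mem_takeawayMove {Δ : Finset (Finset V)} {σ t : Finset V} :
    t ∈ takeawayMove Δ σ ↔ t ∈ Δ ∧ ¬ σ ⊆ t := by
  simp [takeawayMove]

lemma takeawayMove_subset (Δ : Finset (Finset V)) (σ : Finset V) : takeawayMove Δ σ ⊆ Δ :=
  fun _ h => (mem_takeawayMove.mp h).1

/-- `Δ` is the complex of vertices and edges of a graph: its faces have one or two elements,
and every endpoint of a face is a vertex of `Δ`. -/
def IsGraphComplex (Δ : Finset (Finset V)) : Prop :=
  ∀ s ∈ Δ, (s.card = 1 ∨ s.card = 2) ∧ ∀ x ∈ s, {x} ∈ Δ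

/-- Bipartiteness: some labelling of the vertices by naturals, read modulo `2`, takes different
values at the two ends of every edge, which is the same as an odd sum over every edge. -/
def IsBip (Δ : Finset (Finset V)) : Prop :=
  ∃ c : V → ℕ, ∀ s ∈ Δ, s.card = 2 → (∑ x ∈ s, c x) % 2 = 1

/-- The set of edges of a graph complex. -/
def edgeSetOf (Δ : Finset (Finset V)) : Finset (Finset V) := Δ.filter (fun s => s.card = 2)

/-- The degree of the vertex `x` in a graph complex. -/
def degOf (Δ : Finset (Finset V)) (x : V) : ℕ := ((edgeSetOf Δ).filter (fun s => x ∈ s)).card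

lemma IsGraphComplex.move {Δ : Finset (Finset V)} (h : IsGraphComplex Δ) (σ : Finset V) :
    IsGraphComplex (takeawayMove Δ σ) := by
  intro s hs
  rw [mem_takeawayMove] at hs
  refine ⟨(h s hs.1).1, fun x hx => mem_takeawayMove.mpr ⟨(h s hs.1).2 x hx, fun hsub => ?_⟩⟩
  exact hs.2 (hsub.trans (by simpa using hx))

lemma IsBip.mono {Δ Δ' : Finset (Finset V)} (h : IsBip Δ) (hs : Δ' ⊆ Δ) : IsBip Δ' := by
  obtain ⟨c, hc⟩ := h
  exact ⟨c, fun s h1 h2 => hc s (hs h1) h2⟩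

lemma mem_edgeSetOf {Δ : Finset (Finset V)} {s : Finset V} :
    s ∈ edgeSetOf Δ ↔ s ∈ Δ ∧ s.card = 2 := by simp [edgeSetOf]

variable [Fintype V]

/-- The set of vertices of a graph complex. -/
def vertsOf (Δ : Finset (Finset V)) : Finset V := Finset.univ.filter (fun x => {x} ∈ Δ)

lemma mem_vertsOf {Δ : Finset (Finset V)} {x : V} : x ∈ vertsOf Δ ↔ {x} ∈ Δ := by
  simp [vertsOf]

lemma card_move_edge {Δ : Finset (Finset V)} {σ : Finset V} (hσ : σ ∈ Δ) (h2 : σ.card = 2) :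
    (vertsOf (takeawayMove Δ σ)).card = (vertsOf Δ).card ∧
      (edgeSetOf (takeawayMove Δ σ)).card + 1 = (edgeSetOf Δ).card := by
  constructor
  · congr 1
    ext x
    simp only [mem_vertsOf, mem_takeawayMove, and_iff_left_iff_imp]
    intro _ hsub
    have := Finset.card_le_card hsub
    simp [h2] at this
  · have : edgeSetOf (takeawayMove Δ σ) = (edgeSetOf Δ).erase σ := by
      ext s
      simp only [mem_edgeSetOf, mem_takeawayMove, Finset.mem_erase]
      constructor
      · rintro ⟨⟨h, h'⟩, h''⟩
        exact ⟨fun e => h' (e ▸ le_rfl), h, h''⟩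
      · rintro ⟨h, h', h''⟩
        exact ⟨⟨h', fun hs => h (Finset.eq_of_subset_of_card_le hs (by omega)).symm⟩, h''⟩
    rw [this]
    exact Finset.card_erase_add_one (mem_edgeSetOf.mpr ⟨hσ, h2⟩)

lemma card_move_vertex {Δ : Finset (Finset V)} {x : V} (hx : {x} ∈ Δ) :
    (vertsOf (takeawayMove Δ {x})).card + 1 = (vertsOf Δ).card ∧
      (edgeSetOf (takeawayMove Δ {x})).card + degOf Δ x = (edgeSetOf Δ).card := by
  constructor
  · have : vertsOf (takeawayMove Δ {x}) = (vertsOf Δ).erase x := by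
      ext y
      simp only [mem_vertsOf, mem_takeawayMove, Finset.mem_erase, Finset.singleton_subset_iff,
        Finset.mem_singleton]
      tauto
    rw [this]
    exact Finset.card_erase_add_one (mem_vertsOf.mpr hx)
  · have : edgeSetOf (takeawayMove Δ {x}) = (edgeSetOf Δ).filter (fun s => ¬ x ∈ s) := by
      ext s
      simp only [mem_edgeSetOf, mem_takeawayMove, Finset.mem_filter, Finset.singleton_subset_iff]
      tauto
    rw [this, degOf, add_comm]
    exact Finset.card_filter_add_card_filter_not _

/-! ### The nim-value of a bipartite graph -/

/-- Weighted handshake lemma. -/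
lemma sum_deg {Δ : Finset (Finset V)} (h : IsGraphComplex Δ) (c : V → ℕ) :
    ∑ x ∈ vertsOf Δ, c x * degOf Δ x = ∑ s ∈ edgeSetOf Δ, ∑ x ∈ s, c x := by
  have h1 : ∀ x, c x * degOf Δ x = ∑ s ∈ edgeSetOf Δ, if x ∈ s then c x else 0 := by
    intro x
    rw [← Finset.sum_filter, Finset.sum_const, degOf, smul_eq_mul, mul_comm]
  simp_rw [h1]
  rw [Finset.sum_comm]
  refine Finset.sum_congr rfl fun s hs => ?_
  rw [← Finset.sum_filter]
  refine Finset.sum_congr ?_ fun _ _ => rfl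
  ext x
  simp only [Finset.mem_filter, mem_vertsOf, and_iff_right_iff_imp]
  exact fun hx => (h s (mem_edgeSetOf.mp hs).1).2 x hx

lemma exists_even_deg {Δ : Finset (Finset V)} (h : IsGraphComplex Δ)
    (hv : (vertsOf Δ).card % 2 = 1) : ∃ x, {x} ∈ Δ ∧ degOf Δ x % 2 = 0 := by
  by_contra! hcon
  have h1 := sum_deg h (fun _ => 1)
  have h2 : ∑ s ∈ edgeSetOf Δ, ∑ x ∈ s, 1 = (edgeSetOf Δ).card * 2 := by
    rw [Finset.sum_const_nat]
    intro s hs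
    simpa using (mem_edgeSetOf.mp hs).2
  have h3 : (∑ x ∈ vertsOf Δ, 1 * degOf Δ x) % 2 = (vertsOf Δ).card % 2 := by
    rw [Finset.sum_nat_mod, Finset.sum_congr rfl (g := fun _ => 1), Finset.sum_const]
    · simp
    · intro x hx
      have := hcon x (mem_vertsOf.mp hx)
      omega
  omega

lemma exists_odd_deg {Δ : Finset (Finset V)} (h : IsGraphComplex Δ) (hb : IsBip Δ)
    (he : (edgeSetOf Δ).card % 2 = 1) : ∃ x, {x} ∈ Δ ∧ degOf Δ x % 2 = 1 := by
  by_contra! hcon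
  obtain ⟨c, hc⟩ := hb
  have h1 := sum_deg h c
  have h2 : (∑ s ∈ edgeSetOf Δ, ∑ x ∈ s, c x) % 2 = (edgeSetOf Δ).card % 2 := by
    rw [Finset.sum_nat_mod, Finset.sum_congr rfl (g := fun _ => 1), Finset.sum_const]
    · simp
    · intro s hs
      rw [mem_edgeSetOf] at hs
      exact hc s hs.1 hs.2
  have h3 : (∑ x ∈ vertsOf Δ, c x * degOf Δ x) % 2 = 0 := by
    rw [Finset.sum_nat_mod, Finset.sum_congr rfl (g := fun _ => 0), Finset.sum_const]
    · simp
    · intro x hx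
      have := hcon x (mem_vertsOf.mp hx)
      rw [Nat.mul_mod, show degOf Δ x % 2 = 0 by omega]
      simp
  omega

/-- On a bipartite graph only the parities of the numbers of vertices and edges matter.
Every move changes one of the two parities; an odd number of vertices forces a vertex of even
degree, and an odd number of edges forces, by bipartiteness, a vertex of odd degree, so all
smaller values are attained. -/
lemma grundy_bip : ∀ (n : ℕ) (Δ : Finset (Finset V)), Δ.card = n → IsGraphComplex Δ → IsBip Δ →
    grundy Δ = (vertsOf Δ).card % 2 + 2 * ((edgeSetOf Δ).card % 2) := by
  intro n
  induction n using Nat.strong_induction_on with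
  | _ n ih =>
  intro Δ hn hg hb
  have key : ∀ σ ∈ Δ, grundy (takeawayMove Δ σ) =
      (vertsOf (takeawayMove Δ σ)).card % 2 + 2 * ((edgeSetOf (takeawayMove Δ σ)).card % 2) := by
    intro σ hσ
    refine ih _ ?_ _ rfl (hg.move _) (hb.mono (takeawayMove_subset _ _))
    rw [← hn]
    refine Finset.card_lt_card ((takeawayMove_subset Δ σ).ssubset_of_ne fun h => ?_)
    rw [← h, mem_takeawayMove] at hσ
    exact hσ.2 le_rfl
  rw [grundy_eq_iff]
  constructor
  · intro σ hσ
    rw [key σ hσ]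
    rcases (hg σ hσ).1 with h1 | h2
    · obtain ⟨x, rfl⟩ := Finset.card_eq_one.mp h1
      have := card_move_vertex hσ
      omega
    · have := card_move_edge hσ h2
      omega
  · intro m hm
    by_cases hv : (vertsOf Δ).card % 2 = 1
    · by_cases hm' : m = 2 * ((edgeSetOf Δ).card % 2)
      · obtain ⟨x, hx, hd⟩ := exists_even_deg hg hv
        refine ⟨{x}, hx, ?_⟩
        rw [key _ hx]
        have := card_move_vertex hx
        omega
      · have he : (edgeSetOf Δ).card % 2 = 1 := by omega
        by_cases hm0 : m = 0
        · obtain ⟨x, hx, hd⟩ := exists_odd_deg hg hb he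
          refine ⟨{x}, hx, ?_⟩
          rw [key _ hx]
          have := card_move_vertex hx
          omega
        · obtain ⟨σ, hσ⟩ : (edgeSetOf Δ).Nonempty := by
            rw [← Finset.card_pos]; omega
          rw [mem_edgeSetOf] at hσ
          refine ⟨σ, hσ.1, ?_⟩
          rw [key _ hσ.1]
          have := card_move_edge hσ.1 hσ.2
          omega
    · have he : (edgeSetOf Δ).card % 2 = 1 := by omega
      by_cases hm0 : m = 1
      · obtain ⟨x, hx, hd⟩ := exists_odd_deg hg hb he
        refine ⟨{x}, hx, ?_⟩
        rw [key _ hx]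
        have := card_move_vertex hx
        omega
      · obtain ⟨σ, hσ⟩ : (edgeSetOf Δ).Nonempty := by
          rw [← Finset.card_pos]; omega
        rw [mem_edgeSetOf] at hσ
        refine ⟨σ, hσ.1, ?_⟩
        rw [key _ hσ.1]
        have := card_move_edge hσ.1 hσ.2
        omega

/-! ### Theta graphs -/

/-- `Δ` is the complex of the theta graph formed by three internally disjoint paths
`p i 0 = A, p i 1, …, p i (l i) = B` of lengths `l i ≥ 2`; the values of `p i` beyond `l i`
are irrelevant. -/
structure IsTheta (Δ : Finset (Finset V)) (A B : V) (p : Fin 3 → ℕ → V) (l : Fin 3 → ℕ) :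
    Prop where
  two_le : ∀ i, 2 ≤ l i
  start : ∀ i, p i 0 = A
  finish : ∀ i, p i (l i) = B
  inj : ∀ i k k', k ≤ l i → k' ≤ l i → p i k = p i k' → k = k'
  disj : ∀ i j, i ≠ j → ∀ k k', k ≤ l i → k' ≤ l j → p i k = p j k' → p i k = A ∨ p i k = B
  cover : ∀ y, ∃ i k, k ≤ l i ∧ p i k = y
  mem_iff : ∀ s, s ∈ Δ ↔ (∃ y, s = {y}) ∨ ∃ i k, k < l i ∧ s = {p i k, p i (k + 1)}

variable {Δ : Finset (Finset V)} {A B : V} {p : Fin 3 → ℕ → V} {l : Fin 3 → ℕ}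

namespace IsTheta

lemma eq_start (T : IsTheta Δ A B p l) {i : Fin 3} {k : ℕ} (hk : k ≤ l i) (h : p i k = A) :
    k = 0 := T.inj i k 0 hk (by omega) (by rw [h, T.start])

lemma eq_finish (T : IsTheta Δ A B p l) {i : Fin 3} {k : ℕ} (hk : k ≤ l i) (h : p i k = B) :
    k = l i := T.inj i k (l i) hk le_rfl (by rw [h, T.finish])

/-- A vertex on two of the paths sits at the beginning of both or at the end of both. -/
lemma eq_cases (T : IsTheta Δ A B p l) {i j : Fin 3} {k k' : ℕ} (hk : k ≤ l i) (hk' : k' ≤ l j)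
    (h : p i k = p j k') : (i = j ∧ k = k') ∨ (k = 0 ∧ k' = 0) ∨ (k = l i ∧ k' = l j) := by
  by_cases hij : i = j
  · subst hij
    exact Or.inl ⟨rfl, T.inj i k k' hk hk' h⟩
  · rcases T.disj i j hij k k' hk hk' h with hA | hB
    · exact Or.inr (Or.inl ⟨T.eq_start hk hA, T.eq_start hk' (h ▸ hA)⟩)
    · exact Or.inr (Or.inr ⟨T.eq_finish hk hB, T.eq_finish hk' (h ▸ hB)⟩)

lemma adj_ne (T : IsTheta Δ A B p l) {i : Fin 3} {k : ℕ} (hk : k < l i) :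
    p i k ≠ p i (k + 1) := fun h => by
  have := T.inj i k (k + 1) hk.le hk h
  omega

lemma edge_mem (T : IsTheta Δ A B p l) {i : Fin 3} {k : ℕ} (hk : k < l i) :
    {p i k, p i (k + 1)} ∈ Δ := (T.mem_iff _).mpr (Or.inr ⟨i, k, hk, rfl⟩)

lemma vertex_mem (T : IsTheta Δ A B p l) (y : V) : {y} ∈ Δ := (T.mem_iff _).mpr (Or.inl ⟨y, rfl⟩)

lemma edge_card (T : IsTheta Δ A B p l) {i : Fin 3} {k : ℕ} (hk : k < l i) :
    ({p i k, p i (k + 1)} : Finset V).card = 2 := Finset.card_pair (T.adj_ne hk)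

lemma exists_of_card_two (T : IsTheta Δ A B p l) {s : Finset V} (hs : s ∈ Δ) (h2 : s.card = 2) :
    ∃ i k, k < l i ∧ s = {p i k, p i (k + 1)} := by
  rcases (T.mem_iff s).mp hs with ⟨y, rfl⟩ | h
  · simp at h2
  · exact h

lemma isGraphComplex (T : IsTheta Δ A B p l) : IsGraphComplex Δ := by
  intro s hs
  refine ⟨?_, fun x _ => T.vertex_mem x⟩
  rcases (T.mem_iff s).mp hs with ⟨y, rfl⟩ | ⟨i, k, hk, rfl⟩
  · simp
  · exact Or.inr (T.edge_card hk)

/-- A part of a theta graph is bipartite as soon as it misses one edge, at position `m i`, of each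
path `i` whose length does not have the parity `t`. Along path `i` the colour is the parity
of the distance from `A`, switched after position `m i` if needed to give `B` the colour `t`. -/
lemma bip (T : IsTheta Δ A B p l) {Δ' : Finset (Finset V)} (hsub : Δ' ⊆ Δ) (t : ℕ)
    (m : Fin 3 → ℕ) (hm : ∀ i, m i < l i)
    (h : ∀ i, l i % 2 ≠ t % 2 → {p i (m i), p i (m i + 1)} ∉ Δ') : IsBip Δ' := by
  choose I K hK hp using T.cover
  let f : Fin 3 → ℕ → ℕ := fun i k => if k ≤ m i then k else k + l i + t
  have hf : ∀ i k, k ≤ l i → f (I (p i k)) (K (p i k)) % 2 = f i k % 2 := by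
    intro i k hk
    rcases T.eq_cases hk (hK _) (hp (p i k)).symm with ⟨h1, h2⟩ | ⟨h1, h2⟩ | ⟨h1, h2⟩
    · rw [← h1, ← h2]
    · rw [h2, h1]
      simp [f]
    · have a1 := hm i
      have a2 := hm (I (p i k))
      rw [h2]
      simp only [f]
      rw [if_neg (by omega), if_neg (by omega)]
      omega
  refine ⟨fun y => f (I y) (K y), fun s hs h2 => ?_⟩
  obtain ⟨i, k, hk, rfl⟩ := T.exists_of_card_two (hsub hs) h2
  rw [Finset.sum_pair (T.adj_ne hk)]
  have e1 := hf i k hk.le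
  have e2 := hf i (k + 1) hk
  have e3 : (f i k + f i (k + 1)) % 2 = 1 := by
    have := hm i
    by_cases hkm : k = m i
    · subst hkm
      have : l i % 2 = t % 2 := by
        by_contra hne
        exact h i hne hs
      simp only [f]
      rw [if_pos le_rfl, if_neg (by omega)]
      omega
    · simp only [f]
      split_ifs <;> omega
  omega

/-- The edges at an inner vertex are the two edges of its path there. -/
lemma mem_inner_iff (T : IsTheta Δ A B p l) {i : Fin 3} {k : ℕ} (hk : k + 1 < l i) {s : Finset V} :
    (s ∈ edgeSetOf Δ ∧ p i (k + 1) ∈ s) ↔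
      s = {p i k, p i (k + 1)} ∨ s = {p i (k + 1), p i (k + 1 + 1)} := by
  constructor
  · rintro ⟨hs, hmem⟩
    rw [mem_edgeSetOf] at hs
    obtain ⟨j, k', hk', rfl⟩ := T.exists_of_card_two hs.1 hs.2
    simp only [Finset.mem_insert, Finset.mem_singleton] at hmem
    rcases hmem with h | h
    · rcases T.eq_cases hk.le hk'.le h with ⟨rfl, rfl⟩ | h | h
      · exact Or.inr rfl
      · omega
      · omega
    · rcases T.eq_cases hk.le hk' h with ⟨rfl, h'⟩ | h | h
      · obtain rfl : k = k' := by omega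
        exact Or.inl rfl
      · omega
      · omega
  · rintro (rfl | rfl)
    · exact ⟨mem_edgeSetOf.mpr ⟨T.edge_mem (by omega), T.edge_card (by omega)⟩, by simp⟩
    · exact ⟨mem_edgeSetOf.mpr ⟨T.edge_mem hk, T.edge_card hk⟩, by simp⟩

/-- An inner vertex keeps degree `2` in every subposition that contains both of its edges. -/
lemma deg_inner (T : IsTheta Δ A B p l) {Δ' : Finset (Finset V)} (hsub : Δ' ⊆ Δ) {i : Fin 3}
    {k : ℕ} (hk : k + 1 < l i) (h1 : {p i k, p i (k + 1)} ∈ Δ')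
    (h2 : {p i (k + 1), p i (k + 1 + 1)} ∈ Δ') : degOf Δ' (p i (k + 1)) = 2 := by
  have hne : ({p i k, p i (k + 1)} : Finset V) ≠ {p i (k + 1), p i (k + 1 + 1)} := by
    intro h
    have : p i k ∈ ({p i (k + 1), p i (k + 1 + 1)} : Finset V) := by
      rw [← h]; simp
    simp only [Finset.mem_insert, Finset.mem_singleton] at this
    rcases this with h | h
    · have := T.inj _ _ _ (by omega) (by omega) h
      omega
    · have := T.inj _ _ _ (by omega) (by omega) h
      omega
  rw [degOf, ← Finset.card_pair hne]
  congr 1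
  ext s
  rw [Finset.mem_filter]
  simp only [Finset.mem_insert, Finset.mem_singleton]
  rw [← T.mem_inner_iff hk]
  constructor
  · rintro ⟨h, h'⟩
    rw [mem_edgeSetOf] at h
    exact ⟨mem_edgeSetOf.mpr ⟨hsub h.1, h.2⟩, h'⟩
  · intro h
    refine ⟨?_, h.2⟩
    rcases (T.mem_inner_iff hk).mp h with rfl | rfl
    · exact mem_edgeSetOf.mpr ⟨h1, T.edge_card (by omega)⟩
    · exact mem_edgeSetOf.mpr ⟨h2, T.edge_card hk⟩

lemma deg_start (T : IsTheta Δ A B p l) : degOf Δ A = 3 := by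
  have hinj : Function.Injective (fun i : Fin 3 => ({p i 0, p i 1} : Finset V)) := by
    intro i j hij
    have : p i 1 ∈ ({p j 0, p j 1} : Finset V) := by
      rw [← show ({p i 0, p i 1} : Finset V) = {p j 0, p j 1} from hij]
      simp
    have a1 := T.two_le i
    have a2 := T.two_le j
    simp only [Finset.mem_insert, Finset.mem_singleton] at this
    rcases this with h | h
    · rcases T.eq_cases (by omega) (by omega) h with h | h | h
      · exact h.1
      · omega
      · omega
    · rcases T.eq_cases (by omega) (by omega) h with h | h | h
      · exact h.1
      · omega
      · omega
  have : (edgeSetOf Δ).filter (fun s => A ∈ s) =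
      Finset.univ.image (fun i : Fin 3 => ({p i 0, p i 1} : Finset V)) := by
    ext s
    simp only [Finset.mem_filter, mem_edgeSetOf, Finset.mem_image, Finset.mem_univ, true_and]
    constructor
    · rintro ⟨⟨hs, h2⟩, hA⟩
      obtain ⟨i, k, hk, rfl⟩ := T.exists_of_card_two hs h2
      simp only [Finset.mem_insert, Finset.mem_singleton] at hA
      rcases hA with h | h
      · obtain rfl := T.eq_start hk.le h.symm
        exact ⟨i, rfl⟩
      · have := T.eq_start hk h.symm
        omega
    · rintro ⟨i, rfl⟩
      have a1 := T.two_le i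
      exact ⟨⟨T.edge_mem (by omega), T.edge_card (by omega)⟩, by simp [T.start]⟩
  rw [degOf, this, Finset.card_image_of_injective _ hinj]
  rfl

/-- Traversing the three paths backwards exchanges the roles of `A` and `B`. -/
lemma reverse (T : IsTheta Δ A B p l) : IsTheta Δ B A (fun i k => p i (l i - k)) l where
  two_le := T.two_le
  start i := by simp [T.finish]
  finish i := by simp [T.start]
  inj i k k' hk hk' h := by
    have := T.inj i _ _ (by omega) (by omega) h
    omega
  disj i j hij k k' hk hk' h := (T.disj i j hij _ _ (by omega) (by omega) h).symm
  cover y := by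
    obtain ⟨i, k, hk, h⟩ := T.cover y
    exact ⟨i, l i - k, by omega, by simpa [Nat.sub_sub_self hk] using h⟩
  mem_iff s := by
    rw [T.mem_iff]
    refine or_congr_right ⟨?_, ?_⟩
    · rintro ⟨i, k, hk, rfl⟩
      refine ⟨i, l i - (k + 1), by omega, ?_⟩
      rw [Finset.pair_comm, show l i - (l i - (k + 1)) = k + 1 by omega,
        show l i - (l i - (k + 1) + 1) = k by omega]
    · rintro ⟨i, k, hk, rfl⟩
      refine ⟨i, l i - (k + 1), by omega, ?_⟩
      rw [Finset.pair_comm, show l i - (k + 1) + 1 = l i - k by omega]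

lemma bip_remove_start (T : IsTheta Δ A B p l) : IsBip (takeawayMove Δ {A}) := by
  refine T.bip (takeawayMove_subset _ _) 0 (fun _ => 0)
    (fun i => by have := T.two_le i; omega) fun i _ h => ?_
  rw [mem_takeawayMove] at h
  exact h.2 (by simp [T.start])

lemma grundy_remove_start (T : IsTheta Δ A B p l)
    (hpar : ((vertsOf Δ).card + (edgeSetOf Δ).card) % 2 = 1) :
    grundy (takeawayMove Δ {A}) = 1 + (vertsOf Δ).card % 2 := by
  rw [grundy_bip _ _ rfl (T.isGraphComplex.move _) T.bip_remove_start]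
  have h1 := card_move_vertex (T.vertex_mem A)
  rw [T.deg_start] at h1
  omega

/-- Deleting an edge or inner vertex `σ` of path `i` leaves a position `H` in which the numbers of
vertices and edges have equal parity. Deleting from `H` the first edge or the first inner vertex
of another path makes it bipartite; these two options have the values `1` and `2` in some
order, so `H` itself has neither value. -/
lemma grundy_remove_local (T : IsTheta Δ A B p l)
    (hpar : ((vertsOf Δ).card + (edgeSetOf Δ).card) % 2 = 1) {σ : Finset V} (hσ : σ ∈ Δ)
    (hA : σ ≠ {A}) (hB : σ ≠ {B}) :
    grundy (takeawayMove Δ σ) ≠ 1 ∧ grundy (takeawayMove Δ σ) ≠ 2 := by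
  set H := takeawayMove Δ σ with hH
  have hgH : IsGraphComplex H := T.isGraphComplex.move σ
  obtain ⟨i, m, hm, hσm, hother, hparH⟩ : ∃ i m, m < l i ∧ σ ⊆ {p i m, p i (m + 1)} ∧
      (∀ j ≠ i, ∀ k < l j, ¬ σ ⊆ {p j k, p j (k + 1)}) ∧
      ((vertsOf H).card + (edgeSetOf H).card) % 2 = 0 := by
    rcases (T.mem_iff σ).mp hσ with ⟨y, rfl⟩ | ⟨i, m, hm, rfl⟩
    · obtain ⟨i, k, hk, rfl⟩ := T.cover y
      have hk0 : k ≠ 0 := fun h => hA (by rw [h, T.start])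
      have hkl : k ≠ l i := fun h => hB (by rw [h, T.finish])
      refine ⟨i, k, by omega, by simp, fun j hj k' hk' hsub => ?_, ?_⟩
      · simp only [Finset.singleton_subset_iff, Finset.mem_insert, Finset.mem_singleton] at hsub
        rcases hsub with h | h
        · rcases T.eq_cases hk hk'.le h with h | h | h
          · exact hj h.1.symm
          · omega
          · omega
        · rcases T.eq_cases hk hk' h with h | h | h
          · exact hj h.1.symm
          · omega
          · omega
      · rw [hH]
        obtain ⟨k, rfl⟩ : ∃ k', k = k' + 1 := ⟨k - 1, by omega⟩
        have h1 := card_move_vertex hσ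
        rw [T.deg_inner le_rfl (by omega) (T.edge_mem (by omega)) (T.edge_mem (by omega))] at h1
        omega
    · refine ⟨i, m, hm, le_rfl, fun j hj k' hk' hsub => ?_, ?_⟩
      · -- The endpoints of a common edge would be `A` and `B`, but the paths have length `≥ 2`.
        have h0 : p i m ∈ ({p j k', p j (k' + 1)} : Finset V) := hsub (by simp)
        have h1 : p i (m + 1) ∈ ({p j k', p j (k' + 1)} : Finset V) := hsub (by simp)
        have := T.two_le i
        simp only [Finset.mem_insert, Finset.mem_singleton] at h0 h1
        have e0 : m = 0 ∨ m = l i := by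
          rcases h0 with h | h
          · rcases T.eq_cases hm.le hk'.le h with h | h | h
            exacts [absurd h.1.symm hj, Or.inl h.1, Or.inr h.1]
          · rcases T.eq_cases hm.le hk' h with h | h | h
            exacts [absurd h.1.symm hj, Or.inl h.1, Or.inr h.1]
        have e1 : m + 1 = 0 ∨ m + 1 = l i := by
          rcases h1 with h | h
          · rcases T.eq_cases hm hk'.le h with h | h | h
            exacts [absurd h.1.symm hj, Or.inl h.1, Or.inr h.1]
          · rcases T.eq_cases hm hk' h with h | h | h
            exacts [absurd h.1.symm hj, Or.inl h.1, Or.inr h.1]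
        omega
      · rw [hH]
        have h1 := card_move_edge hσ (T.edge_card hm)
        omega
  -- `j` is the path broken next, `q` the path left intact, whose parity the colouring follows.
  obtain ⟨j, q, hji, hall⟩ : ∃ j q : Fin 3, j ≠ i ∧ ∀ r, r = i ∨ r = j ∨ r = q := by
    fin_cases i
    exacts [⟨1, 2, by decide, by decide⟩, ⟨0, 2, by decide, by decide⟩,
      ⟨0, 1, by decide, by decide⟩]
  have hlj := T.two_le j
  have hbip : ∀ τ : Finset V, τ ⊆ {p j 0, p j (0 + 1)} → IsBip (takeawayMove H τ) := by
    intro τ hτ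
    have hsub : takeawayMove H τ ⊆ Δ :=
      (takeawayMove_subset _ _).trans (takeawayMove_subset _ _)
    refine T.bip hsub (l q) (fun r => if r = i then m else 0) (fun r => ?_) fun r hr hmem => ?_
    · have := T.two_le r
      split_ifs with h
      · exact h ▸ hm
      · omega
    · rw [mem_takeawayMove, hH, mem_takeawayMove] at hmem
      rcases hall r with rfl | rfl | rfl
      · simp only [if_true] at hmem
        exact hmem.1.2 hσm
      · simp only [if_neg hji] at hmem
        exact hmem.2 hτ
      · exact hr rfl
  have hedge : ∀ k < l j, {p j k, p j (k + 1)} ∈ H := fun k hk =>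
    mem_takeawayMove.mpr ⟨T.edge_mem hk, hother j hji k hk⟩
  have hw : {p j (0 + 1)} ∈ H := (hgH _ (hedge 0 (by omega))).2 _ (by simp)
  have g1 := grundy_bip _ _ rfl (hgH.move _) (hbip _ le_rfl)
  have g2 := grundy_bip _ _ rfl (hgH.move _) (hbip {p j (0 + 1)} (by simp))
  have c1 := card_move_edge (hedge 0 (by omega)) (T.edge_card (by omega))
  have c2 := card_move_vertex hw
  rw [T.deg_inner (takeawayMove_subset _ _) (by omega) (hedge 0 (by omega))
    (hedge 1 (by omega))] at c2
  have n1 := ((grundy_eq_iff H _).mp rfl).1 _ (hedge 0 (by omega))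
  have n2 := ((grundy_eq_iff H _).mp rfl).1 _ hw
  omega

/-- Among three naturals some two have equal parity. -/
lemma exists_odd_one (l : Fin 3 → ℕ) : ∃ (i : Fin 3) (t : ℕ), ∀ j ≠ i, l j % 2 = t % 2 := by
  by_cases h0 : l 1 % 2 = l 2 % 2
  · exact ⟨0, l 1, by simp [Fin.forall_fin_succ, h0]⟩
  by_cases h1 : l 0 % 2 = l 2 % 2
  · exact ⟨1, l 0, by simp [Fin.forall_fin_succ, h1]⟩
  · have h2 : l 1 % 2 = l 0 % 2 := by omega
    exact ⟨2, l 0, by simp [Fin.forall_fin_succ, h2]⟩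

/-- The nim-value of a theta graph. The option of value `0` comes from breaking a path such that
the other two have lengths of equal parity, which leaves a bipartite graph. -/
lemma grundy_eq (T : IsTheta Δ A B p l)
    (hpar : ((vertsOf Δ).card + (edgeSetOf Δ).card) % 2 = 1) :
    grundy Δ = 2 - (vertsOf Δ).card % 2 := by
  have hA := T.grundy_remove_start hpar
  have hB := T.reverse.grundy_remove_start hpar
  obtain ⟨i, t, ht⟩ := exists_odd_one l
  have hli := T.two_le i
  have hbip : ∀ τ : Finset V, τ ⊆ {p i 0, p i (0 + 1)} → IsBip (takeawayMove Δ τ) := by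
    intro τ hτ
    refine T.bip (takeawayMove_subset _ _) t (fun _ => 0)
      (fun r => by have := T.two_le r; omega) fun r hr hmem => ?_
    by_cases h : r = i
    · subst h
      exact (mem_takeawayMove.mp hmem).2 hτ
    · exact hr (ht r h)
  have hg := T.isGraphComplex
  have he := T.edge_mem (i := i) (k := 0) (by omega)
  have hw := T.vertex_mem (p i (0 + 1))
  have g1 := grundy_bip _ _ rfl (hg.move _) (hbip _ le_rfl)
  have g2 := grundy_bip _ _ rfl (hg.move _) (hbip {p i (0 + 1)} (by simp))
  have c1 := card_move_edge he (T.edge_card (by omega))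
  have c2 := card_move_vertex hw
  rw [T.deg_inner le_rfl (by omega) he (T.edge_mem (by omega))] at c2
  rw [grundy_eq_iff]
  refine ⟨fun σ hσ => ?_, fun m hm => ?_⟩
  · by_cases h1 : σ = {A}
    · subst h1
      omega
    by_cases h2 : σ = {B}
    · subst h2
      omega
    have := T.grundy_remove_local hpar hσ h1 h2
    omega
  · by_cases hv : (vertsOf Δ).card % 2 = 1
    · exact ⟨_, hw, by omega⟩
    · by_cases hm0 : m = 0
      · exact ⟨_, he, by omega⟩
      · exact ⟨_, T.vertex_mem A, by omega⟩

end IsTheta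

/-! ### From walks to theta complexes -/

lemma mem_graphComplex (G : SimpleGraph V) (s : Finset V) :
    s ∈ graphComplex G ↔ (∃ y, s = {y}) ∨ ∃ u v, G.Adj u v ∧ s = {u, v} := by
  simp [graphComplex, eq_comm]

lemma card_vertsOf_graphComplex (G : SimpleGraph V) :
    (vertsOf (graphComplex G)).card = Fintype.card V := by
  rw [← Finset.card_univ]
  congr 1
  ext x
  simp [mem_vertsOf, mem_graphComplex]

lemma card_edgeSetOf_graphComplex (G : SimpleGraph V) :
    (edgeSetOf (graphComplex G)).card = G.edgeFinset.card := by
  symm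
  refine Finset.card_bij (fun e _ => e.toFinset) ?_ ?_ ?_
  · intro e he
    induction e with
    | _ u v =>
    have hadj : G.Adj u v := by simpa using he
    rw [mem_edgeSetOf, mem_graphComplex]
    have hs : s(u, v).toFinset = {u, v} := by ext; simp
    exact ⟨Or.inr ⟨u, v, hadj, hs⟩, by rw [hs]; exact Finset.card_pair hadj.ne⟩
  · intro e _ e' _ h
    ext x
    simpa using congrArg (x ∈ ·) h
  · intro s hs
    rw [mem_edgeSetOf, mem_graphComplex] at hs
    obtain ⟨⟨y, rfl⟩ | ⟨u, v, hadj, rfl⟩, h2⟩ := hs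
    · simp at h2
    · exact ⟨s(u, v), by simpa using hadj, by ext; simp⟩

lemma exists_of_mem_edges {G : SimpleGraph V} {a b : V} (P : G.Walk a b) {e : Sym2 V}
    (he : e ∈ P.edges) : ∃ k < P.length, e = s(P.getVert k, P.getVert (k + 1)) := by
  rw [SimpleGraph.Walk.edges, List.mem_map] at he
  obtain ⟨d, hd, rfl⟩ := he
  obtain ⟨k, hk, rfl⟩ := List.mem_iff_getElem.mp hd
  refine ⟨k, by simpa using hk, ?_⟩
  rw [SimpleGraph.Walk.darts_getElem_eq_getVert]
  rfl

/-- Internally disjoint paths share no edge: the ends of a shared edge would be `A` and `B`,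
and a path of length at least `2` does not pass directly from one to the other. -/
lemma walk_edges_disjoint {G : SimpleGraph V} {P Q : G.Walk A B} (hP : P.IsPath)
    (hl : 2 ≤ P.length) (hd : ∀ y ∈ P.support, y ∈ Q.support → y = A ∨ y = B) {e : Sym2 V}
    (heP : e ∈ P.edges) (heQ : e ∈ Q.edges) : False := by
  obtain ⟨k, hk, rfl⟩ := exists_of_mem_edges P heP
  have h0 := hd _ (P.getVert_mem_support k) (Q.fst_mem_support_of_mem_edges heQ)
  have h1 := hd _ (P.getVert_mem_support (k + 1)) (Q.snd_mem_support_of_mem_edges heQ)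
  rw [hP.getVert_eq_start_iff hk.le, hP.getVert_eq_end_iff hk.le] at h0
  rw [hP.getVert_eq_start_iff hk, hP.getVert_eq_end_iff hk] at h1
  omega

section Walks

variable {G : SimpleGraph V} {P : Fin 3 → G.Walk A B}

/-- By counting, the edges of the three paths are all the edges of the graph. -/
lemma exists_mem_edges_of_adj (hP : ∀ i, (P i).IsPath) (hl : ∀ i, 2 ≤ (P i).length)
    (hd : ∀ i j, i ≠ j → ∀ y ∈ (P i).support, y ∈ (P j).support → y = A ∨ y = B)
    (hedges : G.edgeFinset.card = ∑ i, (P i).length) {u v : V} (h : G.Adj u v) :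
    ∃ i, s(u, v) ∈ (P i).edges := by
  have hU : Finset.univ.biUnion (fun i => (P i).edges.toFinset) = G.edgeFinset := by
    refine Finset.eq_of_subset_of_card_le ?_ ?_
    · intro e he
      simp only [Finset.mem_biUnion, Finset.mem_univ, true_and, List.mem_toFinset] at he
      obtain ⟨i, hi⟩ := he
      rw [SimpleGraph.mem_edgeFinset]
      exact (P i).edges_subset_edgeSet hi
    · rw [hedges, Finset.card_biUnion]
      · refine le_of_eq (Finset.sum_congr rfl fun i _ => ?_)
        rw [List.toFinset_card_of_nodup
          (SimpleGraph.Walk.edges_nodup_of_support_nodup (hP i).support_nodup),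
          SimpleGraph.Walk.length_edges]
      · intro i _ j _ hij
        rw [Function.onFun, Finset.disjoint_left]
        intro e hi hj
        rw [List.mem_toFinset] at hi hj
        exact walk_edges_disjoint (hP i) (hl i) (hd i j hij) hi hj
  have : s(u, v) ∈ G.edgeFinset := by simpa using h
  rw [← hU] at this
  simpa using this

lemma isTheta_of_walks (hP : ∀ i, (P i).IsPath) (hl : ∀ i, 2 ≤ (P i).length)
    (hd : ∀ i j, i ≠ j → ∀ y ∈ (P i).support, y ∈ (P j).support → y = A ∨ y = B)
    (hcover : ∀ y, ∃ i, y ∈ (P i).support)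
    (hedges : G.edgeFinset.card = ∑ i, (P i).length) :
    IsTheta (graphComplex G) A B (fun i => (P i).getVert) (fun i => (P i).length) where
  two_le := hl
  start i := (P i).getVert_zero
  finish i := (P i).getVert_length
  inj i k k' hk hk' h := (hP i).getVert_injOn hk hk' h
  disj i j hij k k' _ _ h :=
    hd i j hij _ ((P i).getVert_mem_support k) (h ▸ (P j).getVert_mem_support k')
  cover y := by
    obtain ⟨i, hi⟩ := hcover y
    obtain ⟨k, h, hk⟩ := SimpleGraph.Walk.mem_support_iff_exists_getVert.mp hi
    exact ⟨i, k, hk, h⟩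
  mem_iff s := by
    rw [mem_graphComplex]
    refine or_congr_right ⟨?_, ?_⟩
    · rintro ⟨u, v, hadj, rfl⟩
      obtain ⟨i, hi⟩ := exists_mem_edges_of_adj hP hl hd hedges hadj
      obtain ⟨k, hk, h⟩ := exists_of_mem_edges _ hi
      refine ⟨i, k, hk, ?_⟩
      ext x
      simpa using congrArg (x ∈ ·) h
    · rintro ⟨i, k, hk, rfl⟩
      exact ⟨_, _, (P i).adj_getVert_succ hk, rfl⟩

/-- The vertices are `A`, `B` and the `l i - 1` inner vertices of each path. -/
lemma card_of_walks (hAB : A ≠ B) (hP : ∀ i, (P i).IsPath)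
    (hd : ∀ i j, i ≠ j → ∀ y ∈ (P i).support, y ∈ (P j).support → y = A ∨ y = B)
    (hcover : ∀ y, ∃ i, y ∈ (P i).support) :
    Fintype.card V = (∑ i, ((P i).length - 1)) + 2 := by
  have hU : (Finset.univ.biUnion fun i => (P i).support.toFinset \ {A, B}) =
      Finset.univ \ {A, B} := by
    ext y
    have := hcover y
    simp only [Finset.mem_biUnion, Finset.mem_univ, true_and, Finset.mem_sdiff, List.mem_toFinset]
    tauto
  have h1 : ∀ i, ((P i).support.toFinset \ {A, B}).card = (P i).length - 1 := by
    intro i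
    rw [Finset.card_sdiff_of_subset, Finset.card_pair hAB,
      List.toFinset_card_of_nodup (hP i).support_nodup, SimpleGraph.Walk.length_support]
    · omega
    · intro y hy
      simp only [Finset.mem_insert, Finset.mem_singleton] at hy
      rcases hy with rfl | rfl <;> simp
  have h2 := congrArg Finset.card hU
  rw [Finset.card_biUnion, Finset.card_sdiff_of_subset (Finset.subset_univ _),
    Finset.card_pair hAB, Finset.card_univ, Finset.sum_congr rfl fun i _ => h1 i] at h2
  · have := Finset.card_le_univ ({A, B} : Finset V)
    rw [Finset.card_pair hAB] at this
    omega
  · intro i _ j _ hij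
    rw [Function.onFun, Finset.disjoint_left]
    intro y hi hj
    simp only [Finset.mem_sdiff, List.mem_toFinset, Finset.mem_insert, Finset.mem_singleton]
      at hi hj
    exact hi.2 (hd i j hij y hi.1 hj.1)

end Walks

end GraphChomp

/-- Let `G` be a theta graph: the union of three internally disjoint paths
`P₁, P₂, P₃` between two vertices `A` and `B`, each of length at least `2` (so `G` arises
from a cycle by joining two nonadjacent cycle vertices by a new internally disjoint path;
`A` and `B` have degree `3` and every other vertex has degree `2`).  Then the nim-value of
graph chomp on `G` is `1` if `v(G)` is odd and `2` if `v(G)` is even. -/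
theorem grundy_theta_graph {V : Type*} [Fintype V] [DecidableEq V]
    (G : SimpleGraph V) (A B : V) (hAB : A ≠ B)
    (P₁ P₂ P₃ : G.Walk A B)
    (h₁ : P₁.IsPath) (h₂ : P₂.IsPath) (h₃ : P₃.IsPath)
    (hl₁ : 2 ≤ P₁.length) (hl₂ : 2 ≤ P₂.length) (hl₃ : 2 ≤ P₃.length)
    (hd₁₂ : ∀ y ∈ P₁.support, y ∈ P₂.support → y = A ∨ y = B)
    (hd₁₃ : ∀ y ∈ P₁.support, y ∈ P₃.support → y = A ∨ y = B)
    (hd₂₃ : ∀ y ∈ P₂.support, y ∈ P₃.support → y = A ∨ y = B)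
    (hcover : ∀ y : V, y ∈ P₁.support ∨ y ∈ P₂.support ∨ y ∈ P₃.support)
    (hedges : G.edgeFinset.card = P₁.length + P₂.length + P₃.length) :
    (Odd (Fintype.card V) → grundy (graphComplex G) = 1) ∧
    (Even (Fintype.card V) → grundy (graphComplex G) = 2) := by
  let P : Fin 3 → G.Walk A B := ![P₁, P₂, P₃]
  have hP : ∀ i, (P i).IsPath := by
    intro i; fin_cases i
    exacts [h₁, h₂, h₃]
  have hl : ∀ i, 2 ≤ (P i).length := by
    intro i; fin_cases i
    exacts [hl₁, hl₂, hl₃]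
  have hd : ∀ i j, i ≠ j → ∀ y ∈ (P i).support, y ∈ (P j).support → y = A ∨ y = B := by
    intro i j hij y
    fin_cases i <;> fin_cases j
    exacts [absurd rfl hij, hd₁₂ y, hd₁₃ y, fun a b => hd₁₂ y b a, absurd rfl hij, hd₂₃ y,
      fun a b => hd₁₃ y b a, fun a b => hd₂₃ y b a, absurd rfl hij]
  have hc : ∀ y, ∃ i, y ∈ (P i).support := by
    intro y
    rcases hcover y with h | h | h
    exacts [⟨0, h⟩, ⟨1, h⟩, ⟨2, h⟩]
  have he : G.edgeFinset.card = ∑ i, (P i).length := by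
    rw [Fin.sum_univ_three]
    exact hedges
  have hcard : Fintype.card V = P₁.length - 1 + (P₂.length - 1) + (P₃.length - 1) + 2 := by
    rw [card_of_walks hAB hP hd hc, Fin.sum_univ_three]
    rfl
  have hv := card_vertsOf_graphComplex G
  have hE : (edgeSetOf (graphComplex G)).card = P₁.length + P₂.length + P₃.length := by
    rw [card_edgeSetOf_graphComplex, ← hedges]
  have key := (isTheta_of_walks hP hl hd hc he).grundy_eq (by omega)
  rw [hv] at key
  constructor
  · intro h
    rw [Nat.odd_iff] at h
    omega
  · intro h
    rw [Nat.even_iff] at h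
    omega
end
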